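/- (Sundquist) Let n ≥ 1 and let x_1,...,x_{2n}, a_1,...,a_{2n} be variables. Then Pf[ (a_i − a_j)/(x_i + x_j) ]_{1≤i<j≤2n} = (−1)^{n(n−1)/2} a_{2δ_n, 2δ_n}(X; A) / Π_{1≤i<j≤2n}(x_i + x_j), where a_{α,β}(X;A) is the determinant of the 2n×2n matrix whose i-th row is (a_i x_i^{α_1}, ..., a_i x_i^{α_n}, x_i^{β_1}, ..., x_i^{β_n}), and 2δ_n = (2n−2, 2n−4, ..., 2, 0). -/

import Mathlib

/-!
Clearing denominators makes sense of the identity over every commutative ring, where it is proved by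
induction on `n`, expanding the Pfaffian along its first row. It remains to see that the determinant
`a_{2δ, 2δ}` obeys the same recursion. In the first variable `t = x 0` both sides of that recursion
are polynomials of degree at most `2 n`, so for distinct `x 1, …, x (2 n + 1)` in a domain it is
enough to compare them at the `2 n + 1` points `t = -x m`. There only the `m`-th summand survives,
and rows `0` and `m` of the determinant involve the same square `t ^ 2 = x m ^ 2`, so that it
collapses to a determinant of size `2 n`. Specializing from `ℤ[X, A]` removes the restriction on the
ring.
-/

open Finset

def pfMatchings (n : ℕ) : Finset (Equiv.Perm (Fin (2 * n))) :=
  Finset.univ.filter (fun σ =>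
    (∀ i : Fin n, σ ⟨2 * i.1, by have := i.2; omega⟩ < σ ⟨2 * i.1 + 1, by have := i.2; omega⟩) ∧
    (∀ i j : Fin n, i < j →
      σ ⟨2 * i.1, by have := i.2; omega⟩ < σ ⟨2 * j.1, by have := j.2; omega⟩))

def pf {R : Type*} [CommRing R] {n : ℕ} (A : Matrix (Fin (2 * n)) (Fin (2 * n)) R) : R :=
  ∑ σ ∈ pfMatchings n,
    ((Equiv.Perm.sign σ : ℤ) : R) *
      ∏ i : Fin n,
        A (σ ⟨2 * i.1, by have := i.2; omega⟩) (σ ⟨2 * i.1 + 1, by have := i.2; omega⟩)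

/-- `V^n(X,Y;A,B)`: the determinant of the `2n × 2n` matrix whose `(i,j)` entry
(0-indexed columns) is `a_i x_i^{n−1−j} y_i^j` for `j < n` and
`b_i x_i^{2n−1−j} y_i^{j−n}` for `n ≤ j < 2n`. -/
def Vdet {R : Type*} [CommRing R] (n : ℕ) (x y a b : Fin (2 * n) → R) : R :=
  Matrix.det (Matrix.of fun i j : Fin (2 * n) =>
    if (j : ℕ) < n then a i * x i ^ (n - 1 - (j : ℕ)) * y i ^ (j : ℕ)
    else b i * x i ^ (2 * n - 1 - (j : ℕ)) * y i ^ ((j : ℕ) - n))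

/-- `a_{α,β}(X;A)`: determinant of the `2n × 2n` matrix whose row `i` is
`(a_i x_i^{α_1}, …, a_i x_i^{α_n}, x_i^{β_1}, …, x_i^{β_n})` (0-indexed columns). -/
def altDet {R : Type*} [CommRing R] (n : ℕ) (α β : Fin n → ℕ)
    (x a : Fin (2 * n) → R) : R :=
  Matrix.det (Matrix.of fun i j : Fin (2 * n) =>
    if h : (j : ℕ) < n then a i * x i ^ α ⟨j, h⟩
    else x i ^ β ⟨(j : ℕ) - n, by have := j.2; omega⟩)

section Pfaffian

variable {R : Type*} [CommRing R] {m n : ℕ}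

/-- The order embedding of `Fin m` into `Fin (m + 2)` whose range omits exactly `0` and `j.succ`.
It indexes what remains of a matrix after the first row of its Pfaffian has been expanded. -/
def omitPair (j : Fin (m + 1)) : Fin m ↪o Fin (m + 2) :=
  (Fin.succAboveOrderEmb j).trans (Fin.succOrderEmb (m + 1))

theorem omitPair_apply (j : Fin (m + 1)) (k : Fin m) :
    omitPair j k = (j.succAbove k).succ := rfl

/-- The permutation `0 ↦ j`, `k.succ ↦ j.succAbove (τ k)`: the word of `τ`, relabelled by the
values other than `j`, preceded by the letter `j`. -/
def consPerm (j : Fin (m + 1)) (τ : Equiv.Perm (Fin m)) : Equiv.Perm (Fin (m + 1)) :=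
  j.cycleRange⁻¹ * Equiv.Perm.decomposeFin.symm (0, τ)

theorem consPerm_zero (j : Fin (m + 1)) (τ : Equiv.Perm (Fin m)) :
    consPerm j τ 0 = j := by
  simp [consPerm]

theorem consPerm_succ (j : Fin (m + 1)) (τ : Equiv.Perm (Fin m)) (k : Fin m) :
    consPerm j τ k.succ = j.succAbove (τ k) := by
  simp [consPerm]

theorem sign_consPerm (j : Fin (m + 1)) (τ : Equiv.Perm (Fin m)) :
    Equiv.Perm.sign (consPerm j τ) = (-1) ^ (j : ℕ) * Equiv.Perm.sign τ := by
  simp [consPerm, Fin.sign_cycleRange]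

theorem exists_eq_consPerm (σ : Equiv.Perm (Fin (m + 1))) :
    ∃ τ, σ = consPerm (σ 0) τ := by
  obtain ⟨⟨p, τ⟩, hτ⟩ := Equiv.Perm.decomposeFin.symm.surjective ((σ 0).cycleRange * σ)
  have hp : p = 0 := by
    simpa using congrArg (fun ρ : Equiv.Perm (Fin (m + 1)) => ρ 0) hτ
  refine ⟨τ, ?_⟩
  rw [hp] at hτ
  rw [consPerm, hτ, inv_mul_cancel_left]

/-- The permutation with word `0, j.succ`, followed by the word of `τ` on the remaining values. It
extends a matching of the remaining values by the pair `{0, j.succ}`. -/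
def consPair (j : Fin (m + 1)) (τ : Equiv.Perm (Fin m)) : Equiv.Perm (Fin (m + 2)) :=
  consPerm 0 (consPerm j τ)

theorem consPair_zero (j : Fin (m + 1)) (τ : Equiv.Perm (Fin m)) : consPair j τ 0 = 0 :=
  consPerm_zero _ _

theorem consPair_one (j : Fin (m + 1)) (τ : Equiv.Perm (Fin m)) :
    consPair j τ 1 = j.succ := by
  rw [consPair, ← Fin.succ_zero_eq_one, consPerm_succ, consPerm_zero, Fin.zero_succAbove]

theorem consPair_succ_succ (j : Fin (m + 1)) (τ : Equiv.Perm (Fin m)) (k : Fin m) :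
    consPair j τ k.succ.succ = omitPair j (τ k) := by
  rw [consPair, consPerm_succ, consPerm_succ, Fin.zero_succAbove, omitPair_apply]

theorem sign_consPair (j : Fin (m + 1)) (τ : Equiv.Perm (Fin m)) :
    Equiv.Perm.sign (consPair j τ) = (-1) ^ (j : ℕ) * Equiv.Perm.sign τ := by
  simp [consPair, sign_consPerm]

theorem consPair_injective (m : ℕ) :
    Function.Injective fun p : Fin (m + 1) × Equiv.Perm (Fin m) => consPair p.1 p.2 := by
  rintro ⟨j, τ⟩ ⟨j', τ'⟩ (h : consPair j τ = consPair j' τ')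
  obtain rfl : j = j' := by
    rw [← Fin.succ_inj, ← consPair_one j τ, h, consPair_one]
  have hτ : τ = τ' := Equiv.ext fun k => (omitPair j).injective <| by
    rw [← consPair_succ_succ, h, consPair_succ_succ]
  rw [hτ]

theorem exists_eq_consPair {σ : Equiv.Perm (Fin (m + 2))} (hσ : σ 0 = 0) :
    ∃ j τ, σ = consPair j τ := by
  obtain ⟨ρ, hρ⟩ := exists_eq_consPerm σ
  obtain ⟨τ, hτ⟩ := exists_eq_consPerm ρ
  exact ⟨ρ 0, τ, by rw [consPair, ← hτ, ← hσ, ← hρ]⟩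

/-- The position `2 i` of the smaller element of the `i`-th pair in the word of a matching. -/
def leftPos (i : Fin n) : Fin (2 * n) := ⟨2 * i, by omega⟩

/-- The position `2 i + 1` of the larger element of the `i`-th pair in the word of a matching. -/
def rightPos (i : Fin n) : Fin (2 * n) := ⟨2 * i + 1, by omega⟩

theorem exists_eq_leftPos_or_rightPos (k : Fin (2 * n)) :
    ∃ i, k = leftPos i ∨ k = rightPos i := by
  refine ⟨⟨k / 2, by omega⟩, ?_⟩
  simp only [leftPos, rightPos, Fin.ext_iff]
  omega

theorem mem_pfMatchings {σ : Equiv.Perm (Fin (2 * n))} :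
    σ ∈ pfMatchings n ↔
      (∀ i, σ (leftPos i) < σ (rightPos i)) ∧ StrictMono fun i => σ (leftPos i) := by
  simp [pfMatchings, leftPos, rightPos, StrictMono]

theorem apply_zero_of_mem_pfMatchings {σ : Equiv.Perm (Fin (2 * (n + 1)))}
    (hσ : σ ∈ pfMatchings (n + 1)) : σ (0 : Fin (2 * n + 2)) = (0 : Fin (2 * n + 2)) := by
  obtain ⟨hpair, hmono⟩ := mem_pfMatchings.1 hσ
  have hleft (i : Fin (n + 1)) : σ (leftPos 0) ≤ σ (leftPos i) := hmono.monotone (Fin.zero_le i)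
  have hle (k : Fin (2 * (n + 1))) : σ (leftPos 0) ≤ σ k := by
    obtain ⟨i, rfl | rfl⟩ := exists_eq_leftPos_or_rightPos k
    · exact hleft i
    · exact (hleft i).trans (hpair i).le
  exact Fin.le_zero_iff.1 <| (hle (σ.symm (0 : Fin (2 * n + 2)))).trans_eq (σ.apply_symm_apply _)

theorem mem_pfMatchings_succ {σ : Equiv.Perm (Fin (2 * (n + 1)))}
    {τ : Equiv.Perm (Fin (2 * n))} (e : Fin (2 * n) ↪o Fin (2 * (n + 1)))
    (hzero : ∀ k, σ (leftPos 0) < e k) (hpair : σ (leftPos 0) < σ (rightPos 0))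
    (hleft : ∀ i : Fin n, σ (leftPos i.succ) = e (τ (leftPos i)))
    (hright : ∀ i : Fin n, σ (rightPos i.succ) = e (τ (rightPos i))) :
    σ ∈ pfMatchings (n + 1) ↔ τ ∈ pfMatchings n := by
  simp [mem_pfMatchings, StrictMono, Fin.forall_fin_succ, hleft, hright, hzero, hpair]

theorem consPair_mem_pfMatchings {j : Fin (2 * n + 1)} {τ : Equiv.Perm (Fin (2 * n))} :
    consPair j τ ∈ pfMatchings (n + 1) ↔ τ ∈ pfMatchings n :=
  mem_pfMatchings_succ (omitPair j) (fun _ => (consPair_zero j τ).trans_lt (Fin.succ_pos _))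
    ((consPair_zero j τ).trans_lt ((Fin.succ_pos j).trans_eq (consPair_one j τ).symm))
    (fun i => consPair_succ_succ j τ (leftPos i)) (fun i => consPair_succ_succ j τ (rightPos i))

theorem pf_zero (A : Matrix (Fin (2 * 0)) (Fin (2 * 0)) R) :
    pf A = 1 := by
  have h : pfMatchings 0 = {1} := by decide
  simp [pf, h]

theorem prod_consPair {M : Type*} [CommMonoid M]
    (f : Fin (2 * (n + 1)) → Fin (2 * (n + 1)) → M) (j : Fin (2 * n + 1))
    (τ : Equiv.Perm (Fin (2 * n))) :
    ∏ i : Fin (n + 1), f (consPair j τ (leftPos i)) (consPair j τ (rightPos i)) =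
      f (0 : Fin (2 * n + 2)) j.succ *
        ∏ i : Fin n, f (omitPair j (τ (leftPos i))) (omitPair j (τ (rightPos i))) := by
  rw [Fin.prod_univ_succ]
  exact congrArg₂ (· * ·) (congrArg₂ f (consPair_zero j τ) (consPair_one j τ))
    (prod_congr rfl fun i _ => congrArg₂ f (consPair_succ_succ j τ (leftPos i))
      (consPair_succ_succ j τ (rightPos i)))

theorem pf_eq_sum (A : Matrix (Fin (2 * n)) (Fin (2 * n)) R) :
    pf A = ∑ σ ∈ pfMatchings n,
      ((Equiv.Perm.sign σ : ℤ) : R) * ∏ i, A (σ (leftPos i)) (σ (rightPos i)) := rfl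

theorem pf_succ
    (A : Matrix (Fin (2 * (n + 1))) (Fin (2 * (n + 1))) R) :
    pf A = ∑ j : Fin (2 * n + 1), (-1) ^ (j : ℕ) * A (0 : Fin (2 * n + 2)) j.succ *
      pf (A.submatrix (omitPair j) (omitPair j)) := by
  simp only [pf_eq_sum, mul_sum]
  rw [← sum_product']
  symm
  refine sum_nbij (fun p => consPair p.1 p.2) ?_ (consPair_injective _).injOn ?_ ?_
  · rintro ⟨j, τ⟩ h
    exact consPair_mem_pfMatchings.2 (mem_product.1 h).2
  · intro σ hσ
    obtain ⟨j, τ, rfl⟩ := exists_eq_consPair (apply_zero_of_mem_pfMatchings hσ)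
    exact ⟨(j, τ), by simpa using consPair_mem_pfMatchings.1 hσ, rfl⟩
  · rintro ⟨j, τ⟩ -
    have hsign : ((Equiv.Perm.sign (consPair j τ) : ℤ) : R) =
        (-1) ^ (j : ℕ) * ((Equiv.Perm.sign τ : ℤ) : R) := by
      simp [sign_consPair]
    refine Eq.trans ?_ (congrArg₂ (· * ·) hsign (prod_consPair A j τ)).symm
    simp only [Matrix.submatrix_apply]
    ring

end Pfaffian

section Products

variable {M : Type*} [CommMonoid M] {m : ℕ}

theorem prod_prod_Ioi_succAbove {f : Fin (m + 1) → Fin (m + 1) → M}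
    (hf : ∀ i j, f i j = f j i) (p : Fin (m + 1)) :
    ∏ i, ∏ j ∈ Ioi i, f i j =
      (∏ k, f p (p.succAbove k)) * ∏ k, ∏ l ∈ Ioi k, f (p.succAbove k) (p.succAbove l) := by
  have hIoi {m : ℕ} (i : Fin m) (g : Fin m → M) :
      ∏ j ∈ Ioi i, g j = ∏ j, if i < j then g j else 1 := by
    rw [← prod_filter, filter_lt_eq_Ioi]
  have hpair (k : Fin m) : f p (p.succAbove k) = (if p < p.succAbove k then f p (p.succAbove k)
      else 1) * if p.succAbove k < p then f (p.succAbove k) p else 1 := by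
    rcases (Fin.succAbove_ne p k).lt_or_gt with h | h <;> simp [h, h.not_gt, hf p]
  simp only [hIoi, Fin.prod_univ_succAbove _ p, prod_mul_distrib, lt_irrefl, if_false, one_mul,
    Fin.succAbove_lt_succAbove_iff, prod_congr rfl fun k _ => hpair k, mul_assoc]

theorem prod_prod_Ioi_omitPair {f : Fin (m + 2) → Fin (m + 2) → M}
    (hf : ∀ i j, f i j = f j i) (j : Fin (m + 1)) :
    ∏ i, ∏ l ∈ Ioi i, f i l =
      f 0 j.succ * (∏ k, f 0 (omitPair j k) * f j.succ (omitPair j k)) *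
        ∏ k, ∏ l ∈ Ioi k, f (omitPair j k) (omitPair j l) := by
  rw [prod_prod_Ioi_succAbove hf 0, Fin.prod_univ_succAbove _ j]
  simp only [Fin.zero_succAbove]
  rw [prod_prod_Ioi_succAbove (fun k l => hf k.succ l.succ) j, prod_mul_distrib]
  simp only [omitPair_apply, mul_assoc]

theorem pf_mul_prod_prod_Ioi_succ {R : Type*} [CommRing R] {n : ℕ}
    (A : Matrix (Fin (2 * (n + 1))) (Fin (2 * (n + 1))) R)
    {f : Fin (2 * n + 2) → Fin (2 * n + 2) → R} (hf : ∀ i j, f i j = f j i) :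
    pf A * ∏ i, ∏ l ∈ Ioi i, f i l =
      ∑ j : Fin (2 * n + 1), (-1) ^ (j : ℕ) * (A (0 : Fin (2 * n + 2)) j.succ * f 0 j.succ) *
        (∏ k, f 0 (omitPair j k) * f j.succ (omitPair j k)) *
        (pf (A.submatrix (omitPair j) (omitPair j)) *
          ∏ k, ∏ l ∈ Ioi k, f (omitPair j k) (omitPair j l)) := by
  rw [pf_succ, sum_mul]
  refine sum_congr rfl fun j _ => ?_
  rw [prod_prod_Ioi_omitPair hf j]
  ring

end Products

section Determinant

variable {R ι : Type*} [CommRing R] {m n : ℕ}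

theorem det_eq_of_row_eq_single {M : Matrix (Fin (m + 1)) (Fin (m + 1)) R} {i j : Fin (m + 1)}
    (h : ∀ l, l ≠ j → M i l = 0) :
    M.det = (-1) ^ (i + j : ℕ) * M i j * (M.submatrix i.succAbove j.succAbove).det := by
  rw [Matrix.det_succ_row M i, sum_eq_single j (fun l _ hl => by rw [h l hl]; ring) (by simp)]

theorem det_eq_of_rows_eq_off_col {M : Matrix (Fin (m + 1)) (Fin (m + 1)) R}
    {i k j : Fin (m + 1)} (hik : i ≠ k) (h : ∀ l, M i (j.succAbove l) = M k (j.succAbove l)) :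
    M.det = (-1) ^ (i + j : ℕ) * (M i j - M k j) * (M.submatrix i.succAbove j.succAbove).det := by
  have hrow (l : Fin (m + 1)) (hl : l ≠ j) : M.updateRow i (M i + (-1 : R) • M k) i l = 0 := by
    obtain ⟨l, rfl⟩ := Fin.exists_succAbove_eq hl
    simp [h l]
  rw [← Matrix.det_updateRow_add_smul_self M hik (-1), det_eq_of_row_eq_single hrow,
    Matrix.submatrix_updateRow_succAbove, Matrix.updateRow_self, Pi.add_apply, Pi.smul_apply,
    neg_one_smul, ← sub_eq_add_neg]

theorem det_eq_of_forall_col_eq_smul_add_succ {A B : Matrix (Fin (m + 1)) (Fin (m + 1)) R}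
    (c : Fin m → R) (hlast : ∀ i, A i (Fin.last m) = B i (Fin.last m))
    (hcastSucc : ∀ i (j : Fin m), A i j.castSucc = B i j.castSucc + c j * A i j.succ) :
    A.det = B.det := by
  rw [← Matrix.det_submatrix_equiv_self Fin.revPerm A,
    ← Matrix.det_submatrix_equiv_self Fin.revPerm B]
  refine Matrix.det_eq_of_forall_col_eq_smul_add_pred (fun j => c j.rev) (fun i => ?_)
    fun i j => ?_
  · simpa using hlast i.rev
  · simpa [Fin.rev_succ, Fin.rev_castSucc] using hcastSucc i.rev j.rev

/-- The matrix with rows `(aᵢ yᵢ ^ (n - 1), …, aᵢ yᵢ, aᵢ, yᵢ ^ (n - 1), …, yᵢ, 1)`. When it is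
square, its determinant is `a_{δ, δ}(Y; A)`. -/
def doubleVandermonde (n : ℕ) (y a : ι → R) : Matrix ι (Fin (2 * n)) R :=
  Matrix.of fun i j =>
    if (j : ℕ) < n then a i * y i ^ (n - 1 - j : ℕ) else y i ^ (2 * n - 1 - j : ℕ)

theorem altDet_two_mul_delta (n : ℕ) (x a : Fin (2 * n) → R) :
    altDet n (fun j => 2 * (n - 1 - (j : ℕ))) (fun j => 2 * (n - 1 - (j : ℕ))) x a =
      (doubleVandermonde n (x ^ 2) a).det := by
  refine congrArg Matrix.det (Matrix.ext fun i j => ?_)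
  have hsub : n - 1 - (j - n) = 2 * n - 1 - (j : ℕ) ∨ (j : ℕ) < n := by omega
  by_cases h : (j : ℕ) < n
  · simp [doubleVandermonde, h, pow_mul]
  · simp [doubleVandermonde, h, pow_mul, hsub.resolve_right h]

theorem map_doubleVandermonde {S : Type*} [CommRing S] (f : R →+* S) (n : ℕ) (y a : ι → R) :
    (doubleVandermonde n y a).map f = doubleVandermonde n (f ∘ y) (f ∘ a) := by
  ext i j
  simp [doubleVandermonde, apply_ite f]

/-- What remains of `doubleVandermonde (n + 1) y a` after subtracting `z` times the next column
from each column of either block but the last one. -/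
def reducedDoubleVandermonde (n : ℕ) (z : R) (y a : ι → R) :
    Matrix ι (Fin (2 * n + 2)) R :=
  Matrix.of fun i j =>
    if (j : ℕ) < n then (y i - z) * (a i * y i ^ (n - 1 - j : ℕ))
    else if (j : ℕ) = n then a i
    else if (j : ℕ) < 2 * n + 1 then (y i - z) * y i ^ (2 * n - j : ℕ)
    else 1

theorem det_reducedDoubleVandermonde (n : ℕ) (z : R) (y a : Fin (2 * n + 2) → R) :
    (reducedDoubleVandermonde n z y a).det = (doubleVandermonde (n + 1) y a).det := by
  symm
  refine det_eq_of_forall_col_eq_smul_add_succ (fun j => if (j : ℕ) = n then 0 else z)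
    (fun i => ?_) fun i j => ?_
  · simp only [doubleVandermonde, reducedDoubleVandermonde, Matrix.of_apply, Fin.val_last]
    grind
  · simp only [doubleVandermonde, reducedDoubleVandermonde, Matrix.of_apply, Fin.val_castSucc,
      Fin.val_succ]
    rcases lt_trichotomy (j : ℕ) n with h | h | h
    · obtain ⟨k, hk⟩ := Nat.exists_eq_add_of_lt h
      rw [if_pos (by omega), if_pos h, if_neg h.ne, if_pos (by omega),
        show n + 1 - 1 - (j : ℕ) = k + 1 by omega, show n - 1 - (j : ℕ) = k by omega,
        show n + 1 - 1 - (j + 1 : ℕ) = k by omega]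
      ring
    · simp [h]
    · obtain ⟨k, hk⟩ := Nat.exists_eq_add_of_lt j.is_lt
      rw [if_neg (by omega), if_neg h.not_gt, if_neg h.ne', if_neg h.ne', if_pos j.is_lt,
        if_neg (by omega), show 2 * (n + 1) - 1 - (j : ℕ) = k + 1 by omega,
        show 2 * n - (j : ℕ) = k by omega, show 2 * (n + 1) - 1 - (j + 1 : ℕ) = k by omega]
      ring

theorem reducedDoubleVandermonde_apply_of_val_eq {p : Fin (2 * n + 2)} (hp : (p : ℕ) = n)
    (z : R) (y a : ι → R) (i : ι) :
    reducedDoubleVandermonde n z y a i p = a i := by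
  simp [reducedDoubleVandermonde, hp]

theorem reducedDoubleVandermonde_apply_succAbove_last {p : Fin (2 * n + 2)}
    (hp : (p : ℕ) = n) (z : R) (y a : ι → R) (i : ι) :
    reducedDoubleVandermonde n z y a i (p.succAbove (Fin.last _)) = 1 := by
  have hlt : p < Fin.last _ := Fin.lt_def.2 (by rw [hp, Fin.val_last]; omega)
  rw [Fin.succAbove_ne_last_last hlt.ne]
  simp only [reducedDoubleVandermonde, Matrix.of_apply, Fin.val_last]
  grind

theorem reducedDoubleVandermonde_apply_succAbove_castSucc {p : Fin (2 * n + 2)}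
    (hp : (p : ℕ) = n) (z : R) (y a : ι → R) (i : ι) (j : Fin (2 * n)) :
    reducedDoubleVandermonde n z y a i (p.succAbove j.castSucc) =
      (y i - z) * doubleVandermonde n y a i j := by
  have hj : (p.succAbove j.castSucc : ℕ) = if (j : ℕ) < n then (j : ℕ) else j + 1 := by
    simp [Fin.succAbove, Fin.lt_def, hp, apply_ite Fin.val]
  simp only [reducedDoubleVandermonde, doubleVandermonde, Matrix.of_apply, hj]
  grind

theorem det_submatrix_reducedDoubleVandermonde {p : Fin (2 * n + 2)}
    (hp : (p : ℕ) = n) (y a : Fin (2 * n + 1) → R) (m : Fin (2 * n + 1)) :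
    ((reducedDoubleVandermonde n (y m) y a).submatrix id p.succAbove).det =
      (-1) ^ (m : ℕ) * (∏ k, (y (m.succAbove k) - y m)) *
        (doubleVandermonde n (y ∘ m.succAbove) (a ∘ m.succAbove)).det := by
  let C := (reducedDoubleVandermonde n (y m) y a).submatrix id p.succAbove
  have hlast (i) : C i (Fin.last _) = 1 := reducedDoubleVandermonde_apply_succAbove_last hp _ y a i
  have hcastSucc (i) (j : Fin (2 * n)) :
      C i j.castSucc = (y i - y m) * doubleVandermonde n y a i j :=
    reducedDoubleVandermonde_apply_succAbove_castSucc hp _ y a i j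
  have hrow (l) (hl : l ≠ Fin.last _) : C m l = 0 := by
    obtain ⟨j, rfl⟩ := Fin.exists_castSucc_eq.2 hl
    rw [hcastSucc, sub_self, zero_mul]
  have hminor : C.submatrix m.succAbove (Fin.last _).succAbove =
      Matrix.of fun i j => (y (m.succAbove i) - y m) *
        doubleVandermonde n (y ∘ m.succAbove) (a ∘ m.succAbove) i j := by
    ext i j
    rw [Fin.succAbove_last]
    exact hcastSucc (m.succAbove i) j
  have hsign : (-1 : R) ^ (m + Fin.last (2 * n) : ℕ) = (-1) ^ (m : ℕ) := by
    simp [pow_add, pow_mul]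
  rw [det_eq_of_row_eq_single hrow, hlast, hminor, Matrix.det_mul_column, hsign, mul_one,
    mul_assoc]

theorem det_doubleVandermonde_succ_of_eq {y a : Fin (2 * n + 2) → R}
    {m : Fin (2 * n + 1)} (h : y 0 = y m.succ) :
    (doubleVandermonde (n + 1) y a).det =
      (-1) ^ n * ((-1) ^ (m : ℕ) * (a 0 - a m.succ) * (∏ k, (y (omitPair m k) - y m.succ)) *
        (doubleVandermonde n (y ∘ omitPair m) (a ∘ omitPair m)).det) := by
  let p : Fin (2 * n + 2) := ⟨n, by omega⟩
  have hp : (p : ℕ) = n := rfl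
  let B := reducedDoubleVandermonde n (y m.succ) y a
  have hB (i) : B i p = a i := reducedDoubleVandermonde_apply_of_val_eq hp _ y a i
  have hrows (l) : B 0 (p.succAbove l) = B m.succ (p.succAbove l) := by
    refine Fin.lastCases ?_ (fun j => ?_) l
    · simp only [B, reducedDoubleVandermonde_apply_succAbove_last hp]
    · simp only [B, reducedDoubleVandermonde_apply_succAbove_castSucc hp, h, sub_self, zero_mul]
  have hminor := det_submatrix_reducedDoubleVandermonde hp (y ∘ Fin.succ) (a ∘ Fin.succ) m
  calc (doubleVandermonde (n + 1) y a).det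
      = B.det := (det_reducedDoubleVandermonde n _ y a).symm
    _ = (-1) ^ n * (a 0 - a m.succ) * (B.submatrix (Fin.succAbove 0) p.succAbove).det := by
      rw [det_eq_of_rows_eq_off_col (Fin.succ_ne_zero m).symm hrows, hB, hB, hp, Fin.val_zero,
        zero_add]
    _ = (-1) ^ n * (a 0 - a m.succ) * ((-1) ^ (m : ℕ) *
          (∏ k, (y (omitPair m k) - y m.succ)) *
            (doubleVandermonde n (y ∘ omitPair m) (a ∘ omitPair m)).det) := by
      rw [Fin.succAbove_zero]
      exact congrArg _ hminor
    _ = _ := by ring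

open Polynomial in
theorem exists_polynomial_eval_eq_det_doubleVandermonde (n : ℕ) (y : Fin (2 * n + 1) → R)
    (a : Fin (2 * n + 2) → R) :
    ∃ P ∈ degreeLT R (2 * n + 1), ∀ t,
      P.eval t = (doubleVandermonde (n + 1) (Fin.cons (t ^ 2) y : Fin (2 * n + 2) → R) a).det := by
  let e (j : Fin (2 * n + 2)) : ℕ := if (j : ℕ) < n + 1 then n - j else 2 * n + 1 - j
  let u (j : Fin (2 * n + 2)) : R := if (j : ℕ) < n + 1 then a 0 else 1
  let minor (j : Fin (2 * n + 2)) : Matrix (Fin (2 * n + 1)) (Fin (2 * n + 1)) R :=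
    (doubleVandermonde (n + 1) y (Fin.tail a)).submatrix id j.succAbove
  refine ⟨∑ j : Fin (2 * n + 2), C ((-1) ^ (j : ℕ) * u j * (minor j).det) * X ^ (2 * e j),
    Submodule.sum_mem _ fun j _ => mem_degreeLT.2 ?_, fun t => ?_⟩
  · have he : 2 * e j < 2 * n + 1 := by grind
    exact (degree_C_mul_X_pow_le _ _).trans_lt (by exact_mod_cast he)
  · have hrow (j : Fin (2 * n + 2)) : u j * t ^ (2 * e j) =
        doubleVandermonde (n + 1) (Fin.cons (t ^ 2) y : Fin (2 * n + 2) → R) a 0 j := by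
      simp only [doubleVandermonde, Matrix.of_apply, Fin.cons_zero, pow_mul, u, e]
      grind
    refine Eq.trans ?_ (Matrix.det_succ_row_zero _).symm
    rw [eval_finsetSum]
    refine sum_congr rfl fun j _ => ?_
    calc (C ((-1) ^ (j : ℕ) * u j * (minor j).det) * X ^ (2 * e j)).eval t
        = (-1) ^ (j : ℕ) * (u j * t ^ (2 * e j)) * (minor j).det := by
          rw [eval_C_mul, eval_X_pow]; ring
      _ = _ := by rw [hrow]; rfl

open Polynomial in
theorem eval_eq_sum_mul_prod_sub [IsDomain R] {P : R[X]} (hP : P ∈ degreeLT R (m + 1))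
    {v c : Fin (m + 1) → R} (hv : Function.Injective v)
    (hPv : ∀ j, P.eval (v j) = c j * ∏ k, (v j - v (j.succAbove k))) (t : R) :
    P.eval t = ∑ j, c j * ∏ k, (t - v (j.succAbove k)) := by
  let L (j : Fin (m + 1)) : R[X] := ∏ k, (X - C (v (j.succAbove k)))
  let Q : R[X] := ∑ j, c j • L j
  have hL (j) : L j ∈ degreeLT R (m + 1) := by
    have hdegree : (L j).degree = m := by simp [L, degree_prod]
    rw [mem_degreeLT, hdegree]
    exact_mod_cast m.lt_succ_self
  have hQdegree : Q ∈ degreeLT R (m + 1) :=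
    Submodule.sum_mem _ fun j _ => Submodule.smul_mem _ _ (hL j)
  have hQ (t : R) : Q.eval t = ∑ j, c j * ∏ k, (t - v (j.succAbove k)) := by
    simp [Q, L, eval_finsetSum, eval_prod]
  have hPQ (i) : P.eval (v i) = Q.eval (v i) := by
    rw [hPv, hQ, sum_eq_single i (fun j _ hj => ?_) (by simp)]
    obtain ⟨k, rfl⟩ := Fin.exists_succAbove_eq hj.symm
    rw [prod_eq_zero (mem_univ k) (sub_self _), mul_zero]
  have hcard : m + 1 = #(univ : Finset (Fin (m + 1))) := by simp
  rw [hcard, mem_degreeLT] at hP hQdegree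
  rw [← hQ, eq_of_degrees_lt_of_eval_index_eq univ hv.injOn hP hQdegree fun i _ => hPQ i]

theorem det_doubleVandermonde_succ_of_injective [IsDomain R] {x : Fin (2 * n + 2) → R}
    (hx : Function.Injective (Fin.tail x)) (a : Fin (2 * n + 2) → R) :
    (doubleVandermonde (n + 1) (x ^ 2) a).det =
      (-1) ^ n * ∑ j : Fin (2 * n + 1), (-1) ^ (j : ℕ) * (a 0 - a j.succ) *
        (∏ k, (x 0 + x (omitPair j k)) * (x j.succ + x (omitPair j k))) *
        (doubleVandermonde n ((x ∘ omitPair j) ^ 2) (a ∘ omitPair j)).det := by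
  obtain ⟨P, hP, hPeval⟩ := exists_polynomial_eval_eq_det_doubleVandermonde n (Fin.tail x ^ 2) a
  let c (j : Fin (2 * n + 1)) : R := (-1) ^ n * ((-1) ^ (j : ℕ) * (a 0 - a j.succ) *
    (∏ k, (x j.succ + x (omitPair j k))) *
    (doubleVandermonde n ((x ∘ omitPair j) ^ 2) (a ∘ omitPair j)).det)
  have hPnode (m : Fin (2 * n + 1)) : P.eval (-x m.succ) =
      c m * ∏ k, (-x m.succ - -x (omitPair m k)) := by
    have hprod : ∏ k, (x (omitPair m k) ^ 2 - x m.succ ^ 2) =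
        (∏ k, (x m.succ + x (omitPair m k))) * ∏ k, (-x m.succ - -x (omitPair m k)) := by
      rw [← prod_mul_distrib]
      exact prod_congr rfl fun k _ => by ring
    rw [hPeval, det_doubleVandermonde_succ_of_eq (m := m) (by simp [Fin.tail])]
    trans (-1) ^ n * ((-1) ^ (m : ℕ) * (a 0 - a m.succ) *
      (∏ k, (x (omitPair m k) ^ 2 - x m.succ ^ 2)) *
      (doubleVandermonde n ((x ∘ omitPair m) ^ 2) (a ∘ omitPair m)).det)
    · rfl
    · rw [hprod]; ring
  have hcons : x ^ 2 = Fin.cons (x 0 ^ 2) (Fin.tail x ^ 2) := (Fin.cons_self_tail (x ^ 2)).symm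
  rw [hcons, ← hPeval, eval_eq_sum_mul_prod_sub hP (neg_injective.comp hx) hPnode, mul_sum]
  refine sum_congr rfl fun j _ => ?_
  simp only [c, prod_mul_distrib, Function.comp_apply, sub_neg_eq_add, Fin.tail, omitPair_apply]
  ring

theorem det_doubleVandermonde_succ (x a : Fin (2 * n + 2) → R) :
    (doubleVandermonde (n + 1) (x ^ 2) a).det =
      (-1) ^ n * ∑ j : Fin (2 * n + 1), (-1) ^ (j : ℕ) * (a 0 - a j.succ) *
        (∏ k, (x 0 + x (omitPair j k)) * (x j.succ + x (omitPair j k))) *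
        (doubleVandermonde n ((x ∘ omitPair j) ^ 2) (a ∘ omitPair j)).det := by
  let f := MvPolynomial.eval₂Hom (Int.castRingHom R) (Sum.elim x a)
  let X (i : Fin (2 * n + 2)) : MvPolynomial (Fin (2 * n + 2) ⊕ Fin (2 * n + 2)) ℤ :=
    MvPolynomial.X (.inl i)
  let A (i : Fin (2 * n + 2)) : MvPolynomial (Fin (2 * n + 2) ⊕ Fin (2 * n + 2)) ℤ :=
    MvPolynomial.X (.inr i)
  have hX (i) : f (X i) = x i := by simp [f, X]
  have hA (i) : f (A i) = a i := by simp [f, A]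
  have hinj : Function.Injective (Fin.tail X) :=
    (MvPolynomial.X_injective.comp Sum.inl_injective).comp (Fin.succ_injective _)
  have hf {m : ℕ} (e : Fin (2 * m) → Fin (2 * n + 2)) :
      f (doubleVandermonde m ((X ∘ e) ^ 2) (A ∘ e)).det =
        (doubleVandermonde m ((x ∘ e) ^ 2) (a ∘ e)).det := by
    rw [f.map_det, f.mapMatrix_apply, map_doubleVandermonde]
    congr 2 <;> ext i <;> simp [hX, hA]
  have hgeneric := congrArg f (det_doubleVandermonde_succ_of_injective hinj A)
  simp only [map_mul, map_sum, map_prod, map_add, map_sub, map_pow, map_neg, map_one, hX, hA,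
    hf] at hgeneric
  exact (hf (m := n + 1) id).symm.trans hgeneric

end Determinant

theorem sundquist_first_general {R : Type*} [CommRing R] (n : ℕ) (x a : Fin (2 * n) → R)
    (B : Matrix (Fin (2 * n)) (Fin (2 * n)) R)
    (hB : ∀ i j, i < j → B i j * (x i + x j) = a i - a j) :
    pf B * ∏ i, ∏ j ∈ Ioi i, (x i + x j) =
      (-1) ^ n.choose 2 *
        altDet n (fun j => 2 * (n - 1 - (j : ℕ))) (fun j => 2 * (n - 1 - (j : ℕ))) x a := by
  induction n with
  | zero => simp [pf_zero, altDet]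
  | succ n ih =>
    simp only [altDet_two_mul_delta] at ih ⊢
    have hentry (j : Fin (2 * n + 1)) := hB (0 : Fin (2 * n + 2)) j.succ (Fin.succ_pos j)
    have hminor (j : Fin (2 * n + 1)) :=
      ih (x ∘ omitPair j) (a ∘ omitPair j) (B.submatrix (omitPair j) (omitPair j))
        fun k l hkl => hB _ _ ((omitPair j).lt_iff_lt.2 hkl)
    simp only [Function.comp_apply] at hminor
    have hsign : (-1 : R) ^ (n + 1).choose 2 * (-1) ^ n = (-1) ^ n.choose 2 := by
      rw [Nat.choose_succ_succ' n 1, Nat.choose_one_right, pow_add, mul_right_comm, ← mul_pow]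
      simp
    refine (pf_mul_prod_prod_Ioi_succ B fun i j => add_comm (x i) (x j)).trans ?_
    refine Eq.trans ?_ (congrArg _ (det_doubleVandermonde_succ x a)).symm
    rw [← mul_assoc, hsign, mul_sum]
    refine sum_congr rfl fun j _ => ?_
    rw [hentry, hminor]
    ring

/-- Sundquist:
`Pf[ (a_i − a_j)/(x_i + x_j) ] = (−1)^{n(n−1)/2} a_{2δ_n,2δ_n}(X;A) / Π_{i<j}(x_i + x_j)`,
where `2δ_n = (2n−2, 2n−4, …, 2, 0)`. -/
theorem sundquist_first (F : Type*) [Field F] (n : ℕ) (hn : 1 ≤ n)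
    (x a : Fin (2 * n) → F)
    (hx : ∀ i j : Fin (2 * n), i ≠ j → x i + x j ≠ 0) :
    pf (Matrix.of fun i j : Fin (2 * n) => (a i - a j) / (x i + x j)) =
      (-1) ^ n.choose 2 *
        altDet n (fun j => 2 * (n - 1 - (j : ℕ))) (fun j => 2 * (n - 1 - (j : ℕ))) x a /
        ∏ i : Fin (2 * n), ∏ j ∈ Ioi i, (x i + x j) := by
  have hprod : ∏ i : Fin (2 * n), ∏ j ∈ Ioi i, (x i + x j) ≠ 0 :=
    prod_ne_zero_iff.2 fun i _ => prod_ne_zero_iff.2 fun j hj => hx i j (mem_Ioi.1 hj).ne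
  exact eq_div_of_mul_eq hprod <| sundquist_first_general n x a _ fun i j hij =>
    div_mul_cancel₀ _ (hx i j hij.ne)
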